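/- arXiv:2407.20890 — 3 statements merged into one kernel-verified Lean document; each statement's English description precedes it below -/
import Mathlib

section
/- Let X be a finite dimensional Banach space over 𝕂 of dimension d, 𝒮 = (S_n)_{n∈ℤ} a sequence of invertible linear operators on X with sup_{n∈ℤ} max{‖S_n‖, ‖S_n⁻¹‖} < ∞, and 𝓔 = {b_1, …, b_d} a basis of X with 𝒮-bounded projections. Then, for each 1 ≤ p < ∞, the shift operator σ_𝒮 : ℓ_p(X) → ℓ_p(X) is conjugate (by a bounded invertible linear operator) to the finite product B_{ω(b_1)} × ⋯ × B_{ω(b_d)} : (ℓ_p(𝕂))^d → (ℓ_p(𝕂))^d, where (ℓ_p(𝕂))^d carries the sum norm. -/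
/-!
Write `e_n(b_i)` for the vectors of `𝓔_n` and `u_n = ∑ i, c_{n,i}(u_n) e_n(b_i)` for the expansion
of `u_n` in that basis. The conjugacy is the passage to coordinates, `(H u)_i = (c_{n,i}(u_n))_n`,
with inverse `v ↦ (∑ i, v_i(n) e_n(b_i))_n`. It intertwines the two operators because
`S_{n+1} e_{n+1}(x) = ω_{n+1}(x) e_n(x)` (`apply_eVec_succ`), so that
`c_{n,i} ∘ S_{n+1} = ω_{n+1}(b_i) c_{n+1,i}`.

Both maps are bounded on `ℓ_p` because they act fibrewise by uniformly bounded operators (`lp.mapCLM`):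
since `‖e_n(b_i)‖ = 1`, bounded projections say that the functionals `c_{n,i}` are uniformly bounded,
while `a ↦ a • e_n(b_i)` has norm at most `1`.
-/

open scoped ENNReal

namespace ShiftOperators

variable {𝕂 : Type*} [RCLike 𝕂] {X : Type*} [NormedAddCommGroup X] [NormedSpace 𝕂 X]

/-- `backComp S n x = (S_{[1,n]})⁻¹ x = Sₙ⁻¹ (⋯ (S₁⁻¹ x))`, with the convention
`S_{[1,0]} = Id` (empty composition). -/
def backComp (S : ℤ → X ≃L[𝕂] X) : ℕ → X → X
  | 0, x => x
  | n + 1, x => (S ((n : ℤ) + 1)).symm (backComp S n x)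

/-- `fwdComp S n x = S_{[-n+1,0]} x = S_{-n+1} (⋯ (S₀ x))`, with the convention
`fwdComp S 0 x = x` (empty composition). -/
def fwdComp (S : ℤ → X ≃L[𝕂] X) : ℕ → X → X
  | 0, x => x
  | n + 1, x => S (-(n : ℤ)) (fwdComp S n x)

/-- The unit vectors `e_n(x)` associated to a sequence of operators `S` and a vector `x`:
`e_n(x) = (S_{[1,n]})⁻¹ x / ‖(S_{[1,n]})⁻¹ x‖` for `n ≥ 0` and
`e_n(x) = S_{[n+1,0]} x / ‖S_{[n+1,0]} x‖` for `n < 0`. -/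
noncomputable def eVec (S : ℤ → X ≃L[𝕂] X) (x : X) (n : ℤ) : X :=
  if 0 ≤ n then ((‖backComp S n.toNat x‖ : ℝ) : 𝕂)⁻¹ • backComp S n.toNat x
  else ((‖fwdComp S (-n).toNat x‖ : ℝ) : 𝕂)⁻¹ • fwdComp S (-n).toNat x

/-- The weights `ω_n(x)`: `ω_n(x) = ‖(S_{[1,n-1]})⁻¹ x‖ / ‖(S_{[1,n]})⁻¹ x‖` for `n > 0`
and `ω_n(x) = ‖S_{[n,0]} x‖ / ‖S_{[n+1,0]} x‖` for `n ≤ 0`. -/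
noncomputable def wt (S : ℤ → X ≃L[𝕂] X) (x : X) (n : ℤ) : ℝ :=
  if 0 < n then ‖backComp S (n - 1).toNat x‖ / ‖backComp S n.toNat x‖
  else ‖fwdComp S (1 - n).toNat x‖ / ‖fwdComp S (-n).toNat x‖

/-- `sup_{n ∈ ℤ} max {‖Sₙ‖, ‖Sₙ⁻¹‖} < ∞`. -/
def UnifBounded (S : ℤ → X ≃L[𝕂] X) : Prop :=
  ∃ C : ℝ, ∀ n : ℤ, ‖(S n : X →L[𝕂] X)‖ ≤ C ∧ ‖((S n).symm : X →L[𝕂] X)‖ ≤ C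

/-- A map is topologically transitive. -/
def TopolTransitive {Y : Type*} [TopologicalSpace Y] (T : Y → Y) : Prop :=
  ∀ U V : Set Y, IsOpen U → IsOpen V → U.Nonempty → V.Nonempty →
    ∃ n : ℕ, (T^[n] '' U ∩ V).Nonempty

/-- A map is (topologically) mixing. -/
def TopolMixing {Y : Type*} [TopologicalSpace Y] (T : Y → Y) : Prop :=
  ∀ U V : Set Y, IsOpen U → IsOpen V → U.Nonempty → V.Nonempty →
    ∃ N : ℕ, ∀ n ≥ N, (T^[n] '' U ∩ V).Nonempty

/-- A map has the (linear) shadowing property with constant `K`: every bounded sequence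
`(z_n)` admits a bounded sequence `(x_n)` with `x_{n+1} - T x_n = z_n` and
`sup ‖x_n‖ ≤ K sup ‖z_n‖`. -/
def ShadowingWith {Y : Type*} [NormedAddCommGroup Y] (T : Y → Y) (K : ℝ) : Prop :=
  ∀ z : ℤ → Y, BddAbove (Set.range fun n => ‖z n‖) →
    ∃ x : ℤ → Y, BddAbove (Set.range fun n => ‖x n‖) ∧
      (∀ n : ℤ, x (n + 1) - T (x n) = z n) ∧
      (⨆ n : ℤ, ‖x n‖) ≤ K * ⨆ n : ℤ, ‖z n‖

/-- A map has the (linear) shadowing property. -/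
def Shadowing {Y : Type*} [NormedAddCommGroup Y] (T : Y → Y) : Prop :=
  ∃ K > 0, ShadowingWith T K

/-- A bounded invertible operator is generalized hyperbolic: `Y = M ⊕ N` for closed
subspaces with `T M ⊆ M`, `T⁻¹ N ⊆ N`, `T` uniformly contracting on `M` and `T⁻¹`
uniformly contracting on `N`. -/
def GeneralizedHyperbolic {Y : Type*} [NormedAddCommGroup Y] [NormedSpace 𝕂 Y]
    (T : Y ≃L[𝕂] Y) : Prop :=
  ∃ M N : Submodule 𝕂 Y, IsClosed (M : Set Y) ∧ IsClosed (N : Set Y) ∧ IsCompl M N ∧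
    (∀ u ∈ M, T u ∈ M) ∧ (∀ v ∈ N, T.symm v ∈ N) ∧
    ∃ C > 0, ∃ lam : ℝ, 0 < lam ∧ lam < 1 ∧
      (∀ u ∈ M, ∀ n : ℕ, ‖(⇑T)^[n] u‖ ≤ C * lam ^ n * ‖u‖) ∧
      (∀ v ∈ N, ∀ n : ℕ, ‖(⇑T.symm)^[n] v‖ ≤ C * lam ^ n * ‖v‖)

end ShiftOperators

open ShiftOperators

namespace ShiftOperators

variable {𝕂 : Type*} [RCLike 𝕂] {X : Type*} [NormedAddCommGroup X] [NormedSpace 𝕂 X]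

lemma backComp_ne_zero (S : ℤ → X ≃L[𝕂] X) {x : X} (hx : x ≠ 0) (n : ℕ) :
    backComp S n x ≠ 0 := by
  induction n with
  | zero => exact hx
  | succ n ih => simpa [backComp] using ih

lemma fwdComp_ne_zero (S : ℤ → X ≃L[𝕂] X) {x : X} (hx : x ≠ 0) (n : ℕ) :
    fwdComp S n x ≠ 0 := by
  induction n with
  | zero => exact hx
  | succ n ih => simpa [fwdComp] using ih

lemma norm_eVec (S : ℤ → X ≃L[𝕂] X) {x : X} (hx : x ≠ 0) (n : ℤ) : ‖eVec S x n‖ = 1 := by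
  unfold eVec
  split_ifs
  · simp [norm_smul, backComp_ne_zero S hx]
  · simp [norm_smul, fwdComp_ne_zero S hx]

/-- The operators `S` permute the lines spanned by the `e_n(x)`, with the weights of `B_{ω(x)}` as
scaling factors. -/
lemma apply_eVec_succ (S : ℤ → X ≃L[𝕂] X) {x : X} (hx : x ≠ 0) (n : ℤ) :
    S (n + 1) (eVec S x (n + 1)) = ((wt S x (n + 1) : ℝ) : 𝕂) • eVec S x n := by
  have hb (k : ℕ) : ((‖backComp S k x‖ : ℝ) : 𝕂) ≠ 0 := by
    simpa using backComp_ne_zero S hx k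
  have hf (k : ℕ) : ((‖fwdComp S k x‖ : ℝ) : 𝕂) ≠ 0 := by
    simpa using fwdComp_ne_zero S hx k
  rcases le_or_gt 0 n with hn | hn
  · obtain ⟨k, rfl⟩ := Int.eq_ofNat_of_zero_le hn
    have h1 : ((k : ℤ) + 1).toNat = k + 1 := by omega
    have h2 : S ((k : ℤ) + 1) (backComp S (k + 1) x) = backComp S k x := by simp [backComp]
    have h3 : (0 : ℤ) ≤ (k : ℤ) + 1 := by omega
    have h4 : (0 : ℤ) < (k : ℤ) + 1 := by omega
    simp only [eVec, wt, h1, if_pos h3, if_pos h4, if_pos hn, map_smul, h2, smul_smul,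
      add_sub_cancel_right, Int.toNat_natCast]
    congr 1
    have := hb k
    have := hb (k + 1)
    push_cast
    field_simp
  · obtain ⟨k, rfl⟩ : ∃ k : ℕ, n = -(k : ℤ) - 1 := ⟨(-n - 1).toNat, by omega⟩
    have h2 : S (-(k : ℤ)) (fwdComp S k x) = fwdComp S (k + 1) x := rfl
    have h3 : ¬ (0 : ℤ) ≤ -(k : ℤ) - 1 := by omega
    have h4 : ¬ (0 : ℤ) < -(k : ℤ) := by omega
    have h5 : (-(-(k : ℤ) - 1)).toNat = k + 1 := by omega
    have h6 : (1 - -(k : ℤ)).toNat = k + 1 := by omega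
    have h7 : (- -(k : ℤ)).toNat = k := by omega
    -- At index `0` the vector `e_0(x)` is defined by the backward branch; both branches give `x / ‖x‖`.
    have h8 : eVec S x (-(k : ℤ)) = ((‖fwdComp S k x‖ : ℝ) : 𝕂)⁻¹ • fwdComp S k x := by
      rcases Nat.eq_zero_or_pos k with rfl | hk
      · simp [eVec, backComp, fwdComp]
      · have : ¬ (0 : ℤ) ≤ -(k : ℤ) := by omega
        simp only [eVec, if_neg this, h7]
    rw [sub_add_cancel, h8]
    simp only [eVec, wt, if_neg h3, if_neg h4, h5, h6, h7, map_smul, h2, smul_smul]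
    congr 1
    have := hf k
    have := hf (k + 1)
    push_cast
    field_simp

end ShiftOperators

/-- **Classification theorem II.** If `X` is a `d`-dimensional Banach space,
`𝒮 = (Sₙ)` a uniformly bounded sequence of invertible operators and `𝓔 = {b 1, …, b d}`
a basis of `X` with `𝒮`-bounded projections, then for each `1 ≤ p < ∞` the shift
operator `σ_𝒮 : ℓ_p(X) → ℓ_p(X)` is conjugate to the product of weighted backward
shifts `B_{ω(b 1)} × ⋯ × B_{ω(b d)}` on `(ℓ_p(𝕂))^d` with the sum norm. -/
theorem shift_operator_conjugate_to_product_of_weighted_shifts_banach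
    {𝕂 : Type*} [RCLike 𝕂] {X : Type*} [NormedAddCommGroup X] [NormedSpace 𝕂 X]
    [CompleteSpace X] {d : ℕ}
    (S : ℤ → X ≃L[𝕂] X) (hS : UnifBounded S)
    (b : Fin d → X) (hbli : LinearIndependent 𝕂 b)
    (hbsp : Submodule.span 𝕂 (Set.range b) = ⊤)
    (hEli : ∀ n : ℤ, LinearIndependent 𝕂 (fun i => eVec S (b i) n))
    (hEsp : ∀ n : ℤ, Submodule.span 𝕂 (Set.range fun i => eVec S (b i) n) = ⊤)
    (hproj : ∃ C : ℝ, ∀ (n : ℤ) (α : Fin d → 𝕂) (i : Fin d),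
      ‖α i • eVec S (b i) n‖ ≤ C * ‖∑ j, α j • eVec S (b j) n‖)
    (p : ℝ≥0∞) [Fact (1 ≤ p)] (hp : p ≠ ∞)
    (σ : lp (fun _ : ℤ => X) p ≃L[𝕂] lp (fun _ : ℤ => X) p)
    (hσ : ∀ (u : lp (fun _ : ℤ => X) p) (n : ℤ), σ u n = S (n + 1) (u (n + 1)))
    (P : PiLp 1 (fun _ : Fin d => lp (fun _ : ℤ => 𝕂) p) ≃L[𝕂]
         PiLp 1 (fun _ : Fin d => lp (fun _ : ℤ => 𝕂) p))
    (hP : ∀ (v : PiLp 1 (fun _ : Fin d => lp (fun _ : ℤ => 𝕂) p)) (i : Fin d) (n : ℤ),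
      P v i n = ((wt S (b i) (n + 1) : ℝ) : 𝕂) * v i (n + 1)) :
    ∃ H : lp (fun _ : ℤ => X) p ≃L[𝕂] PiLp 1 (fun _ : Fin d => lp (fun _ : ℤ => 𝕂) p),
      ∀ u : lp (fun _ : ℤ => X) p, H (σ u) = P (H u) := by
  classical
  obtain ⟨C, hC⟩ := hproj
  have hb0 (i) : b i ≠ 0 := hbli.ne_zero i
  let B (n : ℤ) : Module.Basis (Fin d) 𝕂 X := .mk (hEli n) (hEsp n).ge
  have hB (n i) : B n i = eVec S (b i) n := by simp [B]
  have hK : 0 ≤ max C 0 := le_max_right _ _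
  have hc (i : Fin d) (n : ℤ) (x : X) : ‖(B n).coord i x‖ ≤ max C 0 * ‖x‖ := by
    have h := hC n ((B n).repr x) i
    simp_rw [← hB, (B n).sum_repr, hB, norm_smul, norm_eVec S (hb0 i), mul_one] at h
    exact h.trans (by gcongr; exact le_max_left _ _)
  let c (i : Fin d) (n : ℤ) : X →L[𝕂] 𝕂 := ((B n).coord i).mkContinuous (max C 0) (hc i n)
  have hcn (i n) : ‖c i n‖ ≤ max C 0 := LinearMap.mkContinuous_norm_le _ hK _
  let e (i : Fin d) (n : ℤ) : 𝕂 →L[𝕂] X := .toSpanSingleton 𝕂 (B n i)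
  have hen (i n) : ‖e i n‖ ≤ 1 := by
    simp [e, ContinuousLinearMap.norm_toSpanSingleton, hB, norm_eVec S (hb0 i)]
  let F : lp (fun _ : ℤ => X) p →L[𝕂] PiLp 1 (fun _ : Fin d => lp (fun _ : ℤ => 𝕂) p) :=
    (PiLp.continuousLinearEquiv 1 𝕂 _).symm.toContinuousLinearMap ∘L
      ContinuousLinearMap.pi fun i => lp.mapCLM p (c i) hK (hcn i)
  let G : PiLp 1 (fun _ : Fin d => lp (fun _ : ℤ => 𝕂) p) →L[𝕂] lp (fun _ : ℤ => X) p :=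
    ∑ i, lp.mapCLM p (e i) zero_le_one (hen i) ∘L PiLp.proj 1 _ i
  have hF (u i n) : F u i n = (B n).repr (u n) i := rfl
  have hG (v n) : G v n = ∑ i, v i n • B n i := by
    have h : G v = ∑ i, lp.mapCLM p (e i) zero_le_one (hen i) (v i) := by simp [G]
    rw [h, lp.coeFn_sum]
    exact Finset.sum_apply n _ _
  refine ⟨.equivOfInverse F G (fun u => ?_) (fun v => ?_), fun u => ?_⟩
  · ext n
    simp only [hG, hF, (B n).sum_repr]
  · ext i n
    rw [hF, hG, (B n).repr_sum_self]
  · ext i n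
    rw [ContinuousLinearEquiv.equivOfInverse_apply, ContinuousLinearEquiv.equivOfInverse_apply,
      hP, hF, hF, hσ]
    have key : (B n).coord i ∘ₗ (S (n + 1)).toLinearMap =
        ((wt S (b i) (n + 1) : ℝ) : 𝕂) • (B (n + 1)).coord i := by
      refine (B (n + 1)).ext fun j => ?_
      have hj : S (n + 1) (B (n + 1) j) = ((wt S (b j) (n + 1) : ℝ) : 𝕂) • B n j := by
        rw [hB, hB, apply_eVec_succ S (hb0 j)]
      rcases eq_or_ne j i with rfl | hij
      · simp [hj, RCLike.real_smul_eq_coe_mul]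
      · simp [hj, hij]
    exact LinearMap.congr_fun key (u (n + 1))
end

section
/- Let X be a finite dimensional Banach space over 𝕂, 𝒮 = (S_n)_{n∈ℤ} a sequence of invertible linear operators on X with sup_{n∈ℤ} max{‖S_n‖, ‖S_n⁻¹‖} < ∞, 𝓔 a basis of X with 𝒮-bounded projections, and 1 ≤ p < ∞. If the shift operator σ_𝒮 : ℓ_p(X) → ℓ_p(X) is topologically transitive, then the family {B_{ω(x)} : x ∈ 𝓔} is equi-transitive: for any non-empty open sets U, V ⊆ ℓ_p(𝕂) there exists n ∈ ℕ such that B_{ω(x)}ⁿ(U) ∩ V ≠ ∅ for every x ∈ 𝓔. If σ_𝒮 is mixing, then the family is equi-mixing: for any non-empty open U, V ⊆ ℓ_p(𝕂) there exists N ∈ ℕ such that B_{ω(x)}ⁿ(U) ∩ V ≠ ∅ for every x ∈ 𝓔 and every n ≥ N. -/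
/-!
The coordinates with respect to the bases `e_n(b₁), …, e_n(b_d)` turn the shift `σ_𝒮` into the
weighted shifts `B_{ω(b_i)}`, simultaneously in `i`. Since `S_{n+1} e_{n+1}(x) = ω_{n+1}(x) e_n(x)`
(`S_eVec_succ`), reading off the `i`-th coordinate at every index `n` intertwines `σ_𝒮` with
`B_{ω(b_i)}`; boundedness of the projections makes this a continuous linear map
`π_i : ℓ_p(X) → ℓ_p(𝕂)` (`exists_coordMaps`). Every `a ∈ ℓ_p(𝕂)` has a *common* preimage under all
the `π_i`, namely `(∑_j a_n e_n(b_j))_n`. Hence, for non-empty open `U` and `V`, the sets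
`⋂ᵢ πᵢ⁻¹(U)` and `⋂ᵢ πᵢ⁻¹(V)` are open and non-empty, and any `n` for which `σ_𝒮ⁿ` carries a point
of the first into the second satisfies `B_{ω(b_i)}ⁿ(U) ∩ V ≠ ∅` for all `i` at once.
-/

open scoped ENNReal

open ShiftOperators

section Helpers

variable {𝕂 : Type*} [RCLike 𝕂] {X : Type*} [NormedAddCommGroup X] [NormedSpace 𝕂 X]

lemma norm_backComp_ne_zero {S : ℤ → X ≃L[𝕂] X} {x : X} (hx : x ≠ 0) (n : ℕ) :
    ‖backComp S n x‖ ≠ 0 := by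
  induction n with
  | zero => simpa [backComp] using hx
  | succ n ih => simpa [backComp] using ih

lemma norm_fwdComp_ne_zero {S : ℤ → X ≃L[𝕂] X} {x : X} (hx : x ≠ 0) (n : ℕ) :
    ‖fwdComp S n x‖ ≠ 0 := by
  induction n with
  | zero => simpa [fwdComp] using hx
  | succ n ih => simpa [fwdComp] using ih

lemma norm_eVec {S : ℤ → X ≃L[𝕂] X} {x : X} (hx : x ≠ 0) (n : ℤ) : ‖eVec S x n‖ = 1 := by
  unfold eVec
  split_ifs
  · simp [norm_smul, inv_mul_cancel₀ (norm_backComp_ne_zero (S := S) hx n.toNat)]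
  · simp [norm_smul, inv_mul_cancel₀ (norm_fwdComp_ne_zero (S := S) hx (-n).toNat)]

/-- The operators `S_n` act on the unit vectors `e_n(x)` as a weighted backward shift. -/
lemma S_eVec_succ (S : ℤ → X ≃L[𝕂] X) {x : X} (hx : x ≠ 0) (n : ℤ) :
    S (n + 1) (eVec S x (n + 1)) = ((wt S x (n + 1) : ℝ) : 𝕂) • eVec S x n := by
  have hcast {r : ℝ} (hr : r ≠ 0) : (r : 𝕂) ≠ 0 := by exact_mod_cast hr
  rcases le_or_gt 0 n with hn | hn
  · obtain ⟨m, rfl⟩ := Int.eq_ofNat_of_zero_le hn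
    have h1 : ((m : ℤ) + 1).toNat = m + 1 := by omega
    have h2 : (0 : ℤ) ≤ (m : ℤ) + 1 := by omega
    have h3 : (0 : ℤ) < (m : ℤ) + 1 := by omega
    have h0 := hcast (norm_backComp_ne_zero (S := S) hx m)
    simp only [eVec, wt, h1, h2, h3, hn, if_true, add_sub_cancel_right, Int.toNat_natCast,
      map_smul, smul_smul, RCLike.ofReal_div]
    rw [div_mul_eq_mul_div, mul_inv_cancel₀ h0, one_div]
    simp [backComp]
  · obtain ⟨m, rfl⟩ : ∃ m : ℕ, n = -((m : ℤ) + 1) := ⟨(-n - 1).toNat, by omega⟩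
    have e : -((m : ℤ) + 1) + 1 = -(m : ℤ) := by omega
    have h1 : (- -((m : ℤ) + 1)).toNat = m + 1 := by omega
    have h2 : ¬ (0 : ℤ) ≤ -((m : ℤ) + 1) := by omega
    have h3 : ¬ (0 : ℤ) < -(m : ℤ) := by omega
    have h4 : (1 - -(m : ℤ)).toNat = m + 1 := by omega
    have h5 : (- -(m : ℤ)).toNat = m := by omega
    have h0 := hcast (norm_fwdComp_ne_zero (S := S) hx (m + 1))
    -- At index `0` the definition of `e_0(x)` uses `backComp`, but both compositions are empty.
    have hE : eVec S x (-(m : ℤ)) = ((‖fwdComp S m x‖ : ℝ) : 𝕂)⁻¹ • fwdComp S m x := by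
      rcases Nat.eq_zero_or_pos m with rfl | hm
      · simp [eVec, backComp, fwdComp]
      · have : ¬ (0 : ℤ) ≤ -(m : ℤ) := by omega
        simp only [eVec, this, if_false, h5]
    rw [e, hE]
    simp only [eVec, wt, h1, h2, h3, h4, h5, if_false, map_smul, smul_smul, RCLike.ofReal_div]
    rw [div_mul_eq_mul_div, mul_inv_cancel₀ h0, one_div]
    rfl

lemma norm_le_norm_smul_lp {F : Type*} [NormedAddCommGroup F] [NormedSpace 𝕂 F] {p : ℝ≥0∞}
    {C t : ℝ} (g : lp (fun _ : ℤ => F) p) (n : ℤ) (h : t ≤ C * ‖g n‖) :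
    t ≤ ‖((C : 𝕂) • g) n‖ := by
  rw [lp.coeFn_smul, Pi.smul_apply, norm_smul, RCLike.norm_ofReal]
  exact h.trans (mul_le_mul_of_nonneg_right (le_abs_self C) (norm_nonneg _))

/-- The coordinate maps `π_i : ℓ_p(X) → ℓ_p(𝕂)` with respect to the moving bases `e_n(b_i)`: they
are continuous, intertwine the shift with the weighted shifts, and each `a ∈ ℓ_p(𝕂)` has a preimage
common to all `i`. -/
lemma exists_coordMaps {d : ℕ} (S : ℤ → X ≃L[𝕂] X)
    (b : Fin d → X) (hbli : LinearIndependent 𝕂 b)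
    (hEli : ∀ n : ℤ, LinearIndependent 𝕂 (fun i => eVec S (b i) n))
    (hEsp : ∀ n : ℤ, Submodule.span 𝕂 (Set.range fun i => eVec S (b i) n) = ⊤)
    (hproj : ∃ C : ℝ, ∀ (n : ℤ) (α : Fin d → 𝕂) (i : Fin d),
      ‖α i • eVec S (b i) n‖ ≤ C * ‖∑ j, α j • eVec S (b j) n‖)
    (p : ℝ≥0∞) [Fact (1 ≤ p)]
    (σ : lp (fun _ : ℤ => X) p → lp (fun _ : ℤ => X) p)
    (hσ : ∀ (u : lp (fun _ : ℤ => X) p) (n : ℤ), σ u n = S (n + 1) (u (n + 1)))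
    (B : Fin d → lp (fun _ : ℤ => 𝕂) p → lp (fun _ : ℤ => 𝕂) p)
    (hB : ∀ (i : Fin d) (a : lp (fun _ : ℤ => 𝕂) p) (n : ℤ),
      B i a n = ((wt S (b i) (n + 1) : ℝ) : 𝕂) * a (n + 1)) :
    ∃ P : Fin d → (lp (fun _ : ℤ => X) p →L[𝕂] lp (fun _ : ℤ => 𝕂) p),
      (∀ i, Function.Semiconj (P i) σ (B i)) ∧ ∀ a, ∃ u, ∀ i, P i u = a := by
  obtain ⟨C, hC⟩ := hproj
  have hp0 : p ≠ 0 := (zero_lt_one.trans_le (Fact.out : 1 ≤ p)).ne'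
  have hb0 (i : Fin d) : b i ≠ 0 := hbli.ne_zero i
  let E (n : ℤ) : Module.Basis (Fin d) 𝕂 X := Module.Basis.mk (hEli n) (hEsp n).ge
  have hE (n : ℤ) (i : Fin d) : E n i = eVec S (b i) n := Module.Basis.mk_apply _ _ i
  have hcoord (i : Fin d) (n : ℤ) (x : X) : ‖(E n).repr x i‖ ≤ C * ‖x‖ := by
    have h := hC n (fun j => (E n).repr x j) i
    simp only [← hE] at h
    rwa [(E n).sum_repr, norm_smul, hE, norm_eVec (hb0 _), mul_one] at h
  have hmem (i : Fin d) (u : lp (fun _ : ℤ => X) p) :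
      Memℓp (fun n => (E n).repr (u n) i) p :=
    (lp.memℓp ((C : 𝕂) • u)).mono' fun n => norm_le_norm_smul_lp u n (hcoord i n (u n))
  let L (i : Fin d) : lp (fun _ : ℤ => X) p →ₗ[𝕂] lp (fun _ : ℤ => 𝕂) p :=
    { toFun := fun u => ⟨fun n => (E n).repr (u n) i, hmem i u⟩
      map_add' := fun u v => by ext n; simp; rfl
      map_smul' := fun c u => by ext n; simp }
  let P (i : Fin d) : lp (fun _ : ℤ => X) p →L[𝕂] lp (fun _ : ℤ => 𝕂) p :=
    (L i).mkContinuous ‖(C : 𝕂)‖ fun u => by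
      rw [← norm_smul]
      exact lp.norm_mono hp0 fun n => norm_le_norm_smul_lp u n (hcoord i n (u n))
  have hP (i : Fin d) (u : lp (fun _ : ℤ => X) p) (n : ℤ) :
      P i u n = (E n).repr (u n) i := rfl
  refine ⟨P, fun i u => ?_, fun a => ?_⟩
  · ext n
    rw [hP, hσ, hB, hP]
    conv_lhs => rw [← (E (n + 1)).sum_repr (u (n + 1))]
    simp only [map_sum, map_smul, hE, S_eVec_succ S (hb0 _)]
    simp only [← hE, Module.Basis.repr_self, Finsupp.coe_finsetSum, Finset.sum_apply,
      Finsupp.smul_apply, Finsupp.single_apply, smul_eq_mul]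
    simp [mul_comm]
  · have hu : Memℓp (fun n => ∑ j, a n • E n j) p := by
      refine (lp.memℓp (((d : ℝ) : 𝕂) • a)).mono' fun n => norm_le_norm_smul_lp a n ?_
      refine (norm_sum_le _ _).trans ?_
      simp [norm_smul, hE, norm_eVec (hb0 _)]
    refine ⟨⟨_, hu⟩, fun i => ?_⟩
    ext n
    rw [hP]
    simp [Finsupp.single_apply]

/-- Transfer of a single hitting time `n` from `T` to all of its factors `B i`: the hitting set of
`⋂ᵢ πᵢ⁻¹(U)` and `⋂ᵢ πᵢ⁻¹(V)` works for every `i`. -/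
lemma exists_common_lift {ι Y Z : Type*} [Finite ι] [TopologicalSpace Y] [TopologicalSpace Z]
    {T : Y → Y} {B : ι → Z → Z} {P : ι → Y → Z} (hP : ∀ i, Continuous (P i))
    (hsemi : ∀ i, Function.Semiconj (P i) T (B i)) (hlift : ∀ a, ∃ u, ∀ i, P i u = a)
    {U V : Set Z} (hU : IsOpen U) (hV : IsOpen V) (hU0 : U.Nonempty) (hV0 : V.Nonempty) :
    ∃ U' V' : Set Y, IsOpen U' ∧ IsOpen V' ∧ U'.Nonempty ∧ V'.Nonempty ∧
      ∀ n : ℕ, (T^[n] '' U' ∩ V').Nonempty → ∀ i, ((B i)^[n] '' U ∩ V).Nonempty := by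
  have hne {W : Set Z} : W.Nonempty → (⋂ i, P i ⁻¹' W).Nonempty := by
    rintro ⟨a, ha⟩
    obtain ⟨u, hu⟩ := hlift a
    exact ⟨u, Set.mem_iInter.2 fun i => by simpa [hu i] using ha⟩
  refine ⟨⋂ i, P i ⁻¹' U, ⋂ i, P i ⁻¹' V, isOpen_iInter_of_finite fun i => hU.preimage (hP i),
    isOpen_iInter_of_finite fun i => hV.preimage (hP i), hne hU0, hne hV0, ?_⟩
  rintro n ⟨_, ⟨u, hu, rfl⟩, hv⟩ i
  refine ⟨(B i)^[n] (P i u), ⟨P i u, Set.mem_iInter.1 hu i, rfl⟩, ?_⟩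
  rw [← ((hsemi i).iterate_right n).eq u]
  exact Set.mem_iInter.1 hv i

end Helpers

/-- If `𝓔` is a basis with `𝒮`-bounded projections of a finite dimensional Banach space
`X`, and the shift operator `σ_𝒮 : ℓ_p(X) → ℓ_p(X)` is topologically transitive
(resp. mixing), then the family of weighted backward shifts `{B_{ω(b i)} : i}` is
equi-transitive (resp. equi-mixing). -/
theorem equi_transitive_and_equi_mixing_of_shift_operator
    {𝕂 : Type*} [RCLike 𝕂] {X : Type*} [NormedAddCommGroup X] [NormedSpace 𝕂 X]
    [CompleteSpace X] {d : ℕ}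
    (S : ℤ → X ≃L[𝕂] X) (hS : UnifBounded S)
    (b : Fin d → X) (hbli : LinearIndependent 𝕂 b)
    (hbsp : Submodule.span 𝕂 (Set.range b) = ⊤)
    (hEli : ∀ n : ℤ, LinearIndependent 𝕂 (fun i => eVec S (b i) n))
    (hEsp : ∀ n : ℤ, Submodule.span 𝕂 (Set.range fun i => eVec S (b i) n) = ⊤)
    (hproj : ∃ C : ℝ, ∀ (n : ℤ) (α : Fin d → 𝕂) (i : Fin d),
      ‖α i • eVec S (b i) n‖ ≤ C * ‖∑ j, α j • eVec S (b j) n‖)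
    (p : ℝ≥0∞) [Fact (1 ≤ p)] (hp : p ≠ ∞)
    (σ : lp (fun _ : ℤ => X) p ≃L[𝕂] lp (fun _ : ℤ => X) p)
    (hσ : ∀ (u : lp (fun _ : ℤ => X) p) (n : ℤ), σ u n = S (n + 1) (u (n + 1)))
    (B : Fin d → (lp (fun _ : ℤ => 𝕂) p ≃L[𝕂] lp (fun _ : ℤ => 𝕂) p))
    (hB : ∀ (i : Fin d) (a : lp (fun _ : ℤ => 𝕂) p) (n : ℤ),
      B i a n = ((wt S (b i) (n + 1) : ℝ) : 𝕂) * a (n + 1)) :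
    (TopolTransitive ⇑σ →
      ∀ U V : Set (lp (fun _ : ℤ => 𝕂) p), IsOpen U → IsOpen V → U.Nonempty → V.Nonempty →
        ∃ n : ℕ, ∀ i : Fin d, ((⇑(B i))^[n] '' U ∩ V).Nonempty) ∧
    (TopolMixing ⇑σ →
      ∀ U V : Set (lp (fun _ : ℤ => 𝕂) p), IsOpen U → IsOpen V → U.Nonempty → V.Nonempty →
        ∃ N : ℕ, ∀ n ≥ N, ∀ i : Fin d, ((⇑(B i))^[n] '' U ∩ V).Nonempty) := by
  obtain ⟨P, hsemi, hlift⟩ :=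
    exists_coordMaps S b hbli hEli hEsp hproj p σ hσ (fun i => B i) hB
  constructor
  · intro hT U V hU hV hU0 hV0
    obtain ⟨U', V', hU', hV', hU0', hV0', h⟩ :=
      exists_common_lift (fun i => (P i).continuous) hsemi hlift hU hV hU0 hV0
    obtain ⟨n, hn⟩ := hT U' V' hU' hV' hU0' hV0'
    exact ⟨n, h n hn⟩
  · intro hT U V hU hV hU0 hV0
    obtain ⟨U', V', hU', hV', hU0', hV0', h⟩ :=
      exists_common_lift (fun i => (P i).continuous) hsemi hlift hU hV hU0 hV0
    obtain ⟨N, hN⟩ := hT U' V' hU' hV' hU0' hV0'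
    exact ⟨N, fun n hn => h n (hN n hn)⟩
end

section
/- Let X be a finite dimensional Banach space over 𝕂, 𝒮 = (S_n)_{n∈ℤ} a sequence of invertible linear operators on X with sup_{n∈ℤ} max{‖S_n‖, ‖S_n⁻¹‖} < ∞, 𝓔 a basis of X with 𝒮-bounded projections, and 1 ≤ p < ∞. Then the shift operator σ_𝒮 : ℓ_p(X) → ℓ_p(X) is generalized hyperbolic if and only if it has the shadowing property. -/
/-!
Generalized hyperbolicity implies shadowing for every invertible operator on a Banach space: with
the bounded projections `P`, `Q` onto `M`, `N`, the equation `x (n + 1) - T (x n) = z n` is solved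
by `x n = ∑ k ≥ 0, T ^ k P z (n - 1 - k) - ∑ k ≥ 1, T ^ (-k) Q z (n - 1 + k)`
(`exists_forward_solution`, `GeneralizedHyperbolic.shadowing`).

For the converse, let `F n i` be the unnormalized orbit of the `i`-th basis vector, so that
`S n (F n i) = F (n - 1) i`. In the moving bases `F n` the shift acts on each coordinate as the
unweighted backward shift, all the weights being absorbed in the norms `‖F n i‖`, and the bounded
projections make the `p`-norm comparable to the weighted norms of the `d` coordinates.
Fix `i` and put `A j = ‖F (-j) i‖`. Shadowing applied to the unit impulses
`z j = F (-1 - j) i / A (j + 1)`, placed at position `-1 - j`, and read off in the `i`-th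
coordinate along the same antidiagonal, gives a real sequence `u` with
`u (j + 1) - u j = 1 / A (j + 1)` and `|u j| * A j ≤ K`. Hence `u` is increasing, and its increments
are bounded below by a fixed multiple of its size, so `|u|` grows geometrically forwards from where
`u ≥ 0` and backwards from where `u < 0`; since `1 / A` is sandwiched between increments and bounds of `u`, the weight
`A` decays geometrically in the corresponding direction (`scalar_dichotomy`). The sign of `u`
thus says, for each position and each coordinate, whether the shift contracts or expands there
(`exists_splitting_of_shadowing`), and the vectors supported on the contracting, respectively
expanding, positions form the required subspaces (`generalizedHyperbolic_of_splitting`).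
-/

open scoped ENNReal

namespace ShiftOperators

/-! ### The scalar estimate -/

/-- A bounded-by-`K / A` solution of `u (j + 1) - u j = 1 / A (j + 1)` forces geometric decay of
`A`: forwards from every `j` with `0 ≤ u j`, backwards from every `j` with `u j < 0`. The bound on
`A (j + 1) / A j` is only needed at the place where `u` changes sign. -/
theorem scalar_dichotomy {u A : ℤ → ℝ} {K L : ℝ} (hK : 1 ≤ K) (hA : ∀ j, 0 < A j)
    (hrec : ∀ j, u (j + 1) - u j = (A (j + 1))⁻¹) (hb : ∀ j, |u j| * A j ≤ K)
    (hL1 : 1 ≤ L) (hL : ∀ j, A (j + 1) ≤ L * A j) (j : ℤ) :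
    (0 ≤ u j → ∀ k : ℕ, A (j + k) ≤ L * (K + 1) * (K / (K + 1)) ^ k * A j) ∧
    (u j < 0 → ∀ k : ℕ, A (j - k) ≤ L * (K + 1) * (K / (K + 1)) ^ k * A j) := by
  have hb' : ∀ j, |u j| ≤ K * (A j)⁻¹ := fun j => by
    rw [← div_eq_mul_inv, le_div_iff₀ (hA j)]; exact hb j
  have hinv : ∀ j, 0 < (A j)⁻¹ := fun j => inv_pos.2 (hA j)
  have hl0 : 0 < K / (K + 1) := by positivity
  have hpow : ∀ k : ℕ, L * (K + 1) * (K / (K + 1)) ^ (k + 1) = L * (K * (K / (K + 1)) ^ k) := by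
    intro k
    have : K + 1 ≠ 0 := by positivity
    rw [pow_succ]; field_simp
  have fin : ∀ (a b : ℝ) (k : ℕ), 0 < a → 0 < b →
      a⁻¹ ≤ (K / (K + 1)) ^ k * (K * b⁻¹) → b ≤ K * (K / (K + 1)) ^ k * a := by
    intro a b k ha hb h
    have := mul_le_mul_of_nonneg_left h (mul_pos ha hb).le
    field_simp at this ⊢
    linarith
  have hbase : A j ≤ L * (K + 1) * A j := by
    have : 1 ≤ L * (K + 1) := by nlinarith
    nlinarith [hA j]
  constructor
  · intro hj k
    have step : ∀ i, 0 ≤ u i → 0 ≤ u (i + 1) ∧ u i ≤ K / (K + 1) * u (i + 1) := by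
      intro i hi
      have h1 := hrec i
      have h2 := hinv (i + 1)
      have h3 := (le_abs_self _).trans (hb' (i + 1))
      refine ⟨by linarith, ?_⟩
      rw [div_mul_eq_mul_div, le_div_iff₀ (by positivity)]
      rw [← h1] at h3
      nlinarith
    have iter : ∀ k : ℕ, 0 ≤ u (j + 1 + k) ∧
        u (j + 1) ≤ (K / (K + 1)) ^ k * u (j + 1 + k) := by
      intro k
      induction k with
      | zero => simpa using (step j hj).1
      | succ k ih =>
        have h := step _ ih.1
        push_cast
        rw [← add_assoc]
        refine ⟨h.1, ih.2.trans ?_⟩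
        rw [pow_succ, mul_assoc]
        exact mul_le_mul_of_nonneg_left h.2 (by positivity)
    cases k with
    | zero => simpa using hbase
    | succ k =>
      have h1 : (A (j + 1))⁻¹ ≤ u (j + 1) := by linarith [hrec j]
      have h2 : u (j + 1 + k) ≤ K * (A (j + 1 + k))⁻¹ := (le_abs_self _).trans (hb' _)
      have h3 := fin _ _ k (hA (j + 1)) (hA (j + 1 + k)) (h1.trans ((iter k).2.trans
        (mul_le_mul_of_nonneg_left h2 (by positivity))))
      have h4 : j + ((k + 1 : ℕ) : ℤ) = j + 1 + k := by push_cast; ring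
      rw [h4, hpow]
      calc _ ≤ _ := h3
        _ ≤ K * (K / (K + 1)) ^ k * (L * A j) :=
          mul_le_mul_of_nonneg_left (hL j) (by positivity)
        _ = _ := by ring
  · intro hj k
    have step : ∀ i, u i < 0 → u (i - 1) < 0 ∧ -u i ≤ K / (K + 1) * -u (i - 1) := by
      intro i hi
      have h1 := hrec (i - 1)
      rw [sub_add_cancel] at h1
      have h2 := hinv i
      have h3 := (neg_le_abs _).trans (hb' i)
      refine ⟨by linarith, ?_⟩
      rw [div_mul_eq_mul_div, le_div_iff₀ (by positivity)]
      rw [← h1] at h3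
      nlinarith
    have iter : ∀ k : ℕ, u (j - 1 - k) < 0 ∧
        -u (j - 1) ≤ (K / (K + 1)) ^ k * -u (j - 1 - k) := by
      intro k
      induction k with
      | zero => simpa using (step j hj).1
      | succ k ih =>
        have h := step _ ih.1
        push_cast
        rw [← sub_sub]
        refine ⟨h.1, ih.2.trans ?_⟩
        rw [pow_succ, mul_assoc]
        exact mul_le_mul_of_nonneg_left h.2 (by positivity)
    cases k with
    | zero => simpa using hbase
    | succ k =>
      have h1 : (A j)⁻¹ ≤ -u (j - 1) := by
        have := hrec (j - 1)
        rw [sub_add_cancel] at this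
        linarith
      have h2 : -u (j - 1 - k) ≤ K * (A (j - 1 - k))⁻¹ := (neg_le_abs _).trans (hb' _)
      have h3 := fin _ _ k (hA j) (hA (j - 1 - k)) (h1.trans ((iter k).2.trans
        (mul_le_mul_of_nonneg_left h2 (by positivity))))
      have h4 : j - ((k + 1 : ℕ) : ℤ) = j - 1 - k := by push_cast; ring
      rw [h4, hpow]
      calc _ ≤ _ := h3
        _ ≤ L * (K * (K / (K + 1)) ^ k * A j) :=
          le_mul_of_one_le_left (mul_nonneg (by positivity) (hA j).le) hL1
        _ = _ := by ring

/-! ### Generalized hyperbolicity implies shadowing -/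

/-- If the iterates of `T` decay uniformly along a bounded sequence `w`, the series
`y n = ∑ k, T ^ k (w (n - 1 - k))` is a bounded solution of `y (n + 1) - T (y n) = w n`. -/
theorem exists_forward_solution {𝕂 : Type*} [RCLike 𝕂] {Y : Type*} [NormedAddCommGroup Y]
    [NormedSpace 𝕂 Y] [CompleteSpace Y] (T : Y →L[𝕂] Y) {C lam B : ℝ}
    (hC : 0 < C) (hl0 : 0 < lam) (hl1 : lam < 1) (w : ℤ → Y)
    (hT : ∀ j (k : ℕ), ‖(⇑T)^[k] (w j)‖ ≤ C * lam ^ k * ‖w j‖) (hw : ∀ j, ‖w j‖ ≤ B) :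
    ∃ y : ℤ → Y, (∀ n, y (n + 1) - T (y n) = w n) ∧ ∀ n, ‖y n‖ ≤ C * B * (1 - lam)⁻¹ := by
  have hbd : ∀ n (k : ℕ), ‖(⇑T)^[k] (w (n - 1 - k))‖ ≤ C * B * lam ^ k := fun n k =>
    (hT _ k).trans (by
      have := mul_le_mul_of_nonneg_left (hw (n - 1 - k)) (by positivity : 0 ≤ C * lam ^ k)
      linarith)
  have hg : HasSum (fun k : ℕ => C * B * lam ^ k) (C * B * (1 - lam)⁻¹) :=
    (hasSum_geometric_of_lt_one hl0.le hl1).mul_left _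
  have hs : ∀ n, Summable fun k : ℕ => (⇑T)^[k] (w (n - 1 - k)) := fun n =>
    Summable.of_norm_bounded hg.summable (hbd n)
  refine ⟨fun n => ∑' k : ℕ, (⇑T)^[k] (w (n - 1 - k)), fun n => ?_,
    fun n => tsum_of_norm_bounded hg (hbd n)⟩
  beta_reduce
  rw [(hs (n + 1)).tsum_eq_zero_add, T.map_tsum (hs n)]
  simp only [Function.iterate_zero, id, Function.iterate_succ_apply']
  have : ∀ k : ℕ, n - ((k + 1 : ℕ) : ℤ) = n - 1 - k := fun k => by push_cast; ring
  simp only [this, Nat.cast_zero, sub_zero, add_sub_cancel_right]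

theorem GeneralizedHyperbolic.shadowing {𝕂 : Type*} [RCLike 𝕂] {Y : Type*}
    [NormedAddCommGroup Y] [NormedSpace 𝕂 Y] [CompleteSpace Y] {T : Y ≃L[𝕂] Y}
    (h : GeneralizedHyperbolic T) : Shadowing ⇑T := by
  obtain ⟨M, N, hM, hN, hMN, -, hTN, C, hC, lam, hl0, hl1, hcM, hcN⟩ := h
  have hcompl := Submodule.IsCompl.isTopCompl_of_isClosed hMN hM hN
  obtain ⟨P, Q, hPM, hQN, hPQ⟩ : ∃ P Q : Y →L[𝕂] Y, (∀ y, P y ∈ M) ∧ (∀ y, Q y ∈ N) ∧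
      ∀ y, P y + Q y = y := by
    exact ⟨M.projectionL N hcompl, N.projectionL M hcompl.symm,
      Submodule.projectionL_apply_mem hcompl, Submodule.projectionL_apply_mem hcompl.symm,
      Submodule.projectionL_add_projectionL_eq_self hcompl⟩
  set R : Y →L[𝕂] Y := (T.symm : Y →L[𝕂] Y)
  refine ⟨(C * ‖P‖ + C * (‖R‖ * ‖Q‖)) * (1 - lam)⁻¹ + 1, by
    have : 0 < 1 - lam := by linarith
    positivity, fun z hz => ?_⟩
  set Z := ⨆ n, ‖z n‖
  have hzZ : ∀ n, ‖z n‖ ≤ Z := fun n => le_ciSup hz n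
  have hZ0 : 0 ≤ Z := (norm_nonneg _).trans (hzZ 0)
  obtain ⟨y, hy, hyb⟩ := exists_forward_solution (T : Y →L[𝕂] Y) (B := ‖P‖ * Z) hC hl0 hl1
    (fun n => P (z n)) (fun j k => hcM _ (hPM _) k)
    (fun j => P.le_opNorm_of_le (hzZ j))
  -- Reversing time turns the equation for `T` on `N` into one for `T⁻¹`.
  obtain ⟨v, hv, hvb⟩ := exists_forward_solution R (B := ‖R‖ * (‖Q‖ * Z)) hC hl0 hl1
    (fun n => -R (Q (z (-n - 1))))
    (fun j k => hcN _ (N.neg_mem (hTN _ (hQN _))) k)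
    (fun j => by
      rw [norm_neg]
      exact R.le_opNorm_of_le (Q.le_opNorm_of_le (hzZ _)))
  have hxb : ∀ n, ‖y n + v (-n)‖ ≤ ((C * ‖P‖ + C * (‖R‖ * ‖Q‖)) * (1 - lam)⁻¹ + 1) * Z := by
    intro n
    refine (norm_add_le _ _).trans ?_
    have h1 := hyb n
    have h2 := hvb (-n)
    nlinarith
  refine ⟨fun n => y n + v (-n), ⟨_, by rintro _ ⟨n, rfl⟩; exact hxb n⟩, fun n => ?_,
    ciSup_le hxb⟩
  have h1 := hy n
  have h2 := congrArg T (hv (-(n + 1)))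
  have e1 : -(n + 1) + 1 = -n := by ring
  have e2 : -(-(n + 1)) - 1 = n := by ring
  simp only [e1, e2, map_sub, map_neg, R, ContinuousLinearEquiv.coe_coe,
    ContinuousLinearEquiv.apply_symm_apply] at h1 h2
  beta_reduce
  rw [map_add, ← hPQ (z n), ← h1, ← neg_neg (Q (z n)), ← h2]
  abel

/-! ### Comparison of `ℓ_p` norms up to a translation of the index -/

section LpBounds

variable {X : Type*} [NormedAddCommGroup X] {p : ℝ≥0∞}

theorem memℓp_of_le_shift (hp : 0 < p.toReal) (u : lp (fun _ : ℤ => X) p) {v : ℤ → X}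
    {c : ℝ} (m : ℤ) (h : ∀ n, ‖v n‖ ≤ c * ‖u (n + m)‖) : Memℓp v p := by
  rw [memℓp_gen_iff hp]
  have hs := ((lp.memℓp u).summable hp)
  have hs' := ((Equiv.addRight m).summable_iff.2 hs).mul_left (|c| ^ p.toReal)
  refine Summable.of_nonneg_of_le (fun n => by positivity) (fun n => ?_) hs'
  have : ‖v n‖ ≤ |c| * ‖u (n + m)‖ := (h n).trans (by gcongr; exact le_abs_self c)
  calc ‖v n‖ ^ p.toReal ≤ (|c| * ‖u (n + m)‖) ^ p.toReal := by gcongr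
    _ = _ := Real.mul_rpow (abs_nonneg _) (norm_nonneg _)

theorem norm_le_of_le_shift (hp : 0 < p.toReal) (u v : lp (fun _ : ℤ => X) p)
    {c : ℝ} (hc : 0 ≤ c) (m : ℤ) (h : ∀ n, ‖v n‖ ≤ c * ‖u (n + m)‖) : ‖v‖ ≤ c * ‖u‖ := by
  have hu := lp.norm_nonneg' u
  refine lp.norm_le_of_tsum_le hp (by positivity) ?_
  have hs := ((lp.memℓp u).summable hp)
  have hs' := ((Equiv.addRight m).summable_iff.2 hs).mul_left (c ^ p.toReal)
  rw [Real.mul_rpow hc hu, lp.norm_rpow_eq_tsum hp u,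
    ← (Equiv.addRight m).tsum_eq (fun n => ‖u n‖ ^ p.toReal), ← tsum_mul_left]
  refine ((lp.memℓp v).summable hp).tsum_le_tsum (fun n => ?_) hs'
  calc ‖v n‖ ^ p.toReal ≤ (c * ‖u (n + m)‖) ^ p.toReal := by gcongr; exact h n
    _ = _ := Real.mul_rpow hc (norm_nonneg _)

end LpBounds

variable {𝕂 : Type*} [RCLike 𝕂] {X : Type*} [NormedAddCommGroup X] [NormedSpace 𝕂 X] {d : ℕ}

/-! ### Shadowing implies generalized hyperbolicity -/

/-- In the moving bases `F n` the operators `S n` preserve coordinates. -/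
theorem repr_shift {S : ℤ → X ≃L[𝕂] X} {F : ℤ → Module.Basis (Fin d) 𝕂 X}
    (hF : ∀ n i, S n (F n i) = F (n - 1) i) (n : ℤ) (v : X) (i : Fin d) :
    (F (n - 1)).repr (S n v) i = (F n).repr v i := by
  have h : S n v = ∑ j, (F n).repr v j • F (n - 1) j := by
    conv_lhs => rw [← (F n).sum_repr v]
    simp only [map_sum, map_smul, hF]
  rw [h, Module.Basis.repr_sum_self]

/-- Shadowing provides, for each coordinate `i`, a set `G i` of positions, closed under `n ↦ n - 1`,
such that the weights `‖F n i‖` decay geometrically to the left of every position in `G i` and to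
the right of every position outside it, with constants independent of `i`. -/
theorem exists_splitting_of_shadowing {S : ℤ → X ≃L[𝕂] X} (hS : UnifBounded S)
    {F : ℤ → Module.Basis (Fin d) 𝕂 X} (hF : ∀ n i, S n (F n i) = F (n - 1) i)
    {C : ℝ} (hC1 : 1 ≤ C) (hC : ∀ n v i, ‖(F n).repr v i‖ * ‖F n i‖ ≤ C * ‖v‖)
    {p : ℝ≥0∞} [Fact (1 ≤ p)] (hp : 0 < p)
    {σ : lp (fun _ : ℤ => X) p → lp (fun _ : ℤ => X) p}
    (hσ : ∀ u n, σ u n = S (n + 1) (u (n + 1))) (h : Shadowing σ) :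
    ∃ D > 0, ∃ lam : ℝ, 0 < lam ∧ lam < 1 ∧ ∃ G : Fin d → Set ℤ,
      (∀ i, ∀ n ∈ G i, n - 1 ∈ G i) ∧
      (∀ i, ∀ n ∈ G i, ∀ k : ℕ, ‖F (n - k) i‖ ≤ D * lam ^ k * ‖F n i‖) ∧
      (∀ i, ∀ n ∉ G i, ∀ k : ℕ, ‖F (n + k) i‖ ≤ D * lam ^ k * ‖F n i‖) := by
  obtain ⟨K₀, hK₀, hK⟩ := h
  obtain ⟨L₀, hL₀⟩ := hS
  set K := max 1 (C * K₀)
  set L := max 1 L₀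
  have hK1 : 1 ≤ K := le_max_left _ _
  have hL1 : 1 ≤ L := le_max_left _ _
  have hpos : ∀ n i, 0 < ‖F n i‖ := fun n i => norm_pos_iff.2 ((F n).ne_zero i)
  have key : ∀ i, ∃ u : ℤ → ℝ, (∀ j, u (j + 1) - u j = ‖F (-(j + 1)) i‖⁻¹) ∧
      ∀ j, |u j| * ‖F (-j) i‖ ≤ K := by
    intro i
    -- A unit impulse travelling along the antidiagonal `n = -1 - j`.
    let z : ℤ → lp (fun _ : ℤ => X) p := fun j =>
      lp.single p (-(j + 1)) (((‖F (-(j + 1)) i‖⁻¹ : ℝ) : 𝕂) • F (-(j + 1)) i)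
    have hz : ∀ j, ‖z j‖ = 1 := fun j => by
      simp only [z]
      rw [lp.norm_single hp, norm_smul, RCLike.norm_ofReal, abs_inv, abs_norm,
        inv_mul_cancel₀ (hpos _ _).ne']
    obtain ⟨x, hxb, hx, hxK⟩ := hK z ⟨1, by rintro _ ⟨n, rfl⟩; exact (hz n).le⟩
    have hxn : ∀ j, ‖x j‖ ≤ K₀ := fun j => (le_ciSup hxb j).trans (hxK.trans (by simp [hz]))
    refine ⟨fun j => RCLike.re ((F (-j)).repr (x j (-j)) i), fun j => ?_, fun j => ?_⟩
    · have h1 := congrArg (fun y : lp (fun _ : ℤ => X) p => y (-(j + 1))) (hx j)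
      simp only [lp.coeFn_sub, Pi.sub_apply, hσ, z, lp.single_apply_self] at h1
      have h2 := congrArg (fun y => RCLike.re ((F (-(j + 1))).repr y i)) h1
      have e1 : -(j + 1) + 1 = -j := by ring
      have e2 : -(j + 1) = -j - 1 := by ring
      have h3 := repr_shift hF (-j) (x j (-j)) i
      rw [← e2] at h3
      simp only [e1, map_sub, Finsupp.sub_apply, h3, map_smul, Finsupp.smul_apply,
        Module.Basis.repr_self, Finsupp.single_eq_same, smul_eq_mul, mul_one,
        RCLike.ofReal_re] at h2
      exact h2
    · calc _ ≤ ‖(F (-j)).repr (x j (-j)) i‖ * ‖F (-j) i‖ := by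
            gcongr; exact RCLike.abs_re_le_norm _
        _ ≤ C * ‖x j (-j)‖ := hC _ _ _
        _ ≤ C * K₀ := by
            gcongr; exact (lp.norm_apply_le_norm hp.ne' _ _).trans (hxn j)
        _ ≤ K := le_max_right _ _
  choose u hu hub using key
  have dich := fun i => scalar_dichotomy (A := fun j => ‖F (-j) i‖) hK1 (fun j => hpos _ i)
    (hu i) (hub i) hL1 (fun j => by
      have e2 : -(j + 1) = -j - 1 := by ring
      rw [e2, ← hF]
      exact ((S (-j) : X →L[𝕂] X).le_opNorm _).trans
        (by gcongr; exact (hL₀ _).1.trans (le_max_right _ _)))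
  refine ⟨L * (K + 1), by positivity, K / (K + 1), by positivity,
    (div_lt_one (by positivity)).2 (by linarith), fun i => {n | 0 ≤ u i (-n)},
    fun i n hn => ?_, fun i n hn k => ?_, fun i n hn k => ?_⟩
  · have h1 := hu i (-n)
    have h2 := inv_pos.2 (hpos (-(-n + 1)) i)
    have e : -(n - 1) = -n + 1 := by ring
    simp only [Set.mem_ofPred_eq, e] at hn ⊢
    linarith
  · have := (dich i (-n)).1 hn k
    have e : -(-n + (k : ℤ)) = n - k := by ring
    simpa only [e, neg_neg] using this
  · have := (dich i (-n)).2 (not_le.1 hn) k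
    have e : -(-n - (k : ℤ)) = n + k := by ring
    simpa only [e, neg_neg] using this

/-- The contracting subspace consists of the sequences whose `i`-th coordinate is supported in
`G i` for every `i`, the expanding one of those whose `i`-th coordinate is supported off `G i`. -/
theorem generalizedHyperbolic_of_splitting {S : ℤ → X ≃L[𝕂] X}
    {F : ℤ → Module.Basis (Fin d) 𝕂 X} (hF : ∀ n i, S n (F n i) = F (n - 1) i)
    {C : ℝ} (hC1 : 1 ≤ C) (hC : ∀ n v i, ‖(F n).repr v i‖ * ‖F n i‖ ≤ C * ‖v‖)
    {p : ℝ≥0∞} [Fact (1 ≤ p)] (hp : 0 < p.toReal)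
    {σ : lp (fun _ : ℤ => X) p ≃L[𝕂] lp (fun _ : ℤ => X) p}
    (hσ : ∀ u n, σ u n = S (n + 1) (u (n + 1)))
    {D lam : ℝ} (hD : 0 < D) (hl0 : 0 < lam) (hl1 : lam < 1) {G : Fin d → Set ℤ}
    (hG : ∀ i, ∀ n ∈ G i, n - 1 ∈ G i)
    (hGM : ∀ i, ∀ n ∈ G i, ∀ k : ℕ, ‖F (n - k) i‖ ≤ D * lam ^ k * ‖F n i‖)
    (hGN : ∀ i, ∀ n ∉ G i, ∀ k : ℕ, ‖F (n + k) i‖ ≤ D * lam ^ k * ‖F n i‖) :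
    GeneralizedHyperbolic σ := by
  classical
  have : FiniteDimensional 𝕂 X := Module.Finite.of_basis (F 0)
  -- `φ n i u` is the `i`-th coordinate of the entry `u n`.
  let φ : ℤ → Fin d → lp (fun _ : ℤ => X) p →L[𝕂] 𝕂 := fun n i =>
    (LinearMap.toContinuousLinearMap ((F n).coord i)) ∘L lp.evalCLM 𝕂 (fun _ : ℤ => X) p n
  have hφ : ∀ n i u, φ n i u = (F n).repr (u n) i := fun n i u => rfl
  have hφσ : ∀ n i u, φ n i (σ u) = φ (n + 1) i u := fun n i u => by
    have := repr_shift hF (n + 1) (u (n + 1)) i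
    rw [add_sub_cancel_right] at this
    rw [hφ, hφ, hσ, this]
  have hφσs : ∀ n i u, φ n i (σ.symm u) = φ (n - 1) i u := fun n i u => by
    have := hφσ (n - 1) i (σ.symm u)
    rw [sub_add_cancel, ContinuousLinearEquiv.apply_symm_apply] at this
    exact this.symm
  have hφit : ∀ (k : ℕ) n i u, φ n i ((⇑σ)^[k] u) = φ (n + k) i u := by
    intro k
    induction k with
    | zero => simp
    | succ k ih =>
      intro n i u
      rw [Function.iterate_succ_apply', hφσ, ih]
      push_cast
      congr 2; ring
  have hφits : ∀ (k : ℕ) n i u, φ n i ((⇑σ.symm)^[k] u) = φ (n - k) i u := by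
    intro k
    induction k with
    | zero => simp
    | succ k ih =>
      intro n i u
      rw [Function.iterate_succ_apply', hφσs, ih]
      push_cast
      congr 2; ring
  have hsum : ∀ n (u : lp (fun _ : ℤ => X) p), u n = ∑ i, φ n i u • F n i :=
    fun n u => ((F n).sum_repr (u n)).symm
  -- A translate of the coordinates of `u` has norm controlled by how much the weights grow on the
  -- support of `u`.
  have bound : ∀ (u v : lp (fun _ : ℤ => X) p) (m : ℤ) (c : ℝ), 0 ≤ c →
      (∀ n i, φ n i v = φ (n + m) i u) →
      (∀ n i, φ (n + m) i u ≠ 0 → ‖F n i‖ ≤ c * ‖F (n + m) i‖) →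
      ‖v‖ ≤ d * C * c * ‖u‖ := by
    intro u v m c hc hv hle
    refine norm_le_of_le_shift hp u v (by positivity) m fun n => ?_
    rw [hsum n v]
    calc _ ≤ ∑ i : Fin d, C * c * ‖u (n + m)‖ := norm_sum_le_of_le _ fun i _ => ?_
      _ = _ := by simp; ring
    rw [norm_smul, hv]
    by_cases h0 : φ (n + m) i u = 0
    · rw [h0, norm_zero, zero_mul]; positivity
    · calc _ ≤ ‖φ (n + m) i u‖ * (c * ‖F (n + m) i‖) := by gcongr; exact hle n i h0
        _ = c * (‖φ (n + m) i u‖ * ‖F (n + m) i‖) := by ring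
        _ ≤ c * (C * ‖u (n + m)‖) := mul_le_mul_of_nonneg_left (hC _ _ _) hc
        _ = _ := by ring
  let M : Submodule 𝕂 (lp (fun _ : ℤ => X) p) :=
    ⨅ (n : ℤ) (i : Fin d) (_ : n ∉ G i), LinearMap.ker (φ n i : _ →ₗ[𝕂] 𝕂)
  let N : Submodule 𝕂 (lp (fun _ : ℤ => X) p) :=
    ⨅ (n : ℤ) (i : Fin d) (_ : n ∈ G i), LinearMap.ker (φ n i : _ →ₗ[𝕂] 𝕂)
  have hM : ∀ u, u ∈ M ↔ ∀ n i, n ∉ G i → φ n i u = 0 := by simp [M, Submodule.mem_iInf]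
  have hN : ∀ u, u ∈ N ↔ ∀ n i, n ∈ G i → φ n i u = 0 := by simp [N, Submodule.mem_iInf]
  refine ⟨M, N, ?_, ?_, ⟨?_, ?_⟩, fun u hu => ?_, fun v hv => ?_, d * C * D + 1,
    by positivity, lam, hl0, hl1, fun u hu k => ?_, fun u hu k => ?_⟩
  · have : (M : Set (lp (fun _ : ℤ => X) p)) =
        ⋂ (n : ℤ) (i : Fin d) (_ : n ∉ G i), {u | φ n i u = 0} := by
      ext u; simp [hM]
    rw [this]
    exact isClosed_iInter fun n => isClosed_iInter fun i => isClosed_iInter fun _ =>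
      isClosed_eq (φ n i).continuous continuous_const
  · have : (N : Set (lp (fun _ : ℤ => X) p)) =
        ⋂ (n : ℤ) (i : Fin d) (_ : n ∈ G i), {u | φ n i u = 0} := by
      ext u; simp [hN]
    rw [this]
    exact isClosed_iInter fun n => isClosed_iInter fun i => isClosed_iInter fun _ =>
      isClosed_eq (φ n i).continuous continuous_const
  · rw [Submodule.disjoint_def]
    intro u hu hv
    rw [hM] at hu
    rw [hN] at hv
    ext n
    rw [hsum n u]
    refine Finset.sum_eq_zero fun i _ => ?_
    by_cases h : n ∈ G i
    · rw [hv n i h, zero_smul]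
    · rw [hu n i h, zero_smul]
  · rw [codisjoint_iff, eq_top_iff]
    intro u _
    -- `w` is the part of `u` supported in `G`; bounded projections keep it in `ℓ_p`.
    let w : ℤ → X := fun n => ∑ i, if n ∈ G i then φ n i u • F n i else 0
    have hw : Memℓp w p := by
      refine memℓp_of_le_shift hp u (c := d * C) 0 fun n => ?_
      rw [add_zero]
      calc _ ≤ ∑ i : Fin d, C * ‖u n‖ := norm_sum_le_of_le _ fun i _ => ?_
        _ = _ := by simp; ring
      split_ifs
      · rw [norm_smul]; exact hC _ _ _
      · rw [norm_zero]; positivity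
    have hφw : ∀ n i, φ n i ⟨w, hw⟩ = if n ∈ G i then φ n i u else 0 := by
      intro n i
      have : w n = ∑ i, (if n ∈ G i then φ n i u else 0) • F n i :=
        Finset.sum_congr rfl fun i _ => by split_ifs <;> simp
      rw [hφ]
      change (F n).repr (w n) i = _
      rw [this, Module.Basis.repr_sum_self]
    rw [Submodule.mem_sup]
    refine ⟨⟨w, hw⟩, (hM _).2 fun n i h => ?_, u - ⟨w, hw⟩, (hN _).2 fun n i h => ?_,
      by abel⟩
    · rw [hφw, if_neg h]
    · rw [map_sub, hφw, if_pos h, sub_self]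
  · rw [hM] at hu ⊢
    intro n i h
    rw [hφσ]
    refine hu _ _ fun h' => h ?_
    simpa using hG i _ h'
  · rw [hN] at hv ⊢
    intro n i h
    rw [hφσs]
    exact hv _ _ (hG i _ h)
  · rw [hM] at hu
    refine (bound u _ k (D * lam ^ k) (by positivity) (fun n i => hφit k n i u)
      fun n i h0 => ?_).trans ?_
    · have := hGM i (n + k) (by_contra fun h => h0 (hu _ _ h)) k
      rwa [add_sub_cancel_right] at this
    · have : 0 ≤ lam ^ k * ‖u‖ := by positivity
      linarith
  · rw [hN] at hu
    refine (bound u _ (-k) (D * lam ^ k) (by positivity) (fun n i => hφits k n i u)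
      fun n i h0 => ?_).trans ?_
    · have := hGN i (n + -k) (fun h => h0 (hu _ _ h)) k
      rwa [neg_add_cancel_right] at this
    · have : 0 ≤ lam ^ k * ‖u‖ := by positivity
      linarith

/-! ### Orbits of basis vectors -/

/-- The unnormalized vectors whose normalizations are `e_n(x)`: the two-sided orbit with
`orb S x 0 = x` and `S n (orb S x n) = orb S x (n - 1)`. -/
noncomputable def orb (S : ℤ → X ≃L[𝕂] X) (x : X) (n : ℤ) : X :=
  if 0 ≤ n then backComp S n.toNat x else fwdComp S (-n).toNat x

theorem eVec_eq (S : ℤ → X ≃L[𝕂] X) (x : X) (n : ℤ) :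
    eVec S x n = ((‖orb S x n‖ : ℝ) : 𝕂)⁻¹ • orb S x n := by
  unfold eVec orb
  split_ifs <;> rfl

theorem map_orb (S : ℤ → X ≃L[𝕂] X) (x : X) (n : ℤ) :
    S n (orb S x n) = orb S x (n - 1) := by
  unfold orb
  obtain ⟨m, rfl | rfl⟩ := n.eq_nat_or_neg
  · cases m with
    | zero => simp [backComp, fwdComp]
    | succ m =>
      have h1 : (0 : ℤ) ≤ (m + 1 : ℕ) := by positivity
      have h2 : ((m + 1 : ℕ) : ℤ) - 1 = m := by push_cast; ring
      rw [if_pos h1, h2, if_pos (by positivity), Int.toNat_natCast, Int.toNat_natCast]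
      simp [backComp]
  · have h2 : -(-(m : ℤ) - 1) = (m + 1 : ℕ) := by push_cast; ring
    rw [if_neg (show ¬ (0 : ℤ) ≤ -m - 1 by omega), h2, Int.toNat_natCast, neg_neg,
      Int.toNat_natCast]
    have : (if (0 : ℤ) ≤ -m then backComp S (-(m : ℤ)).toNat x else fwdComp S m x)
        = fwdComp S m x := by
      cases m with
      | zero => simp [backComp, fwdComp]
      | succ m => rw [if_neg (by omega)]
    rw [this]
    rfl

end ShiftOperators

open ShiftOperators

/-- If `𝓔` is a basis with `𝒮`-bounded projections of a finite dimensional Banach space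
`X`, then the shift operator `σ_𝒮 : ℓ_p(X) → ℓ_p(X)` is generalized hyperbolic if and
only if it has the shadowing property. -/
theorem shift_operator_generalized_hyperbolic_iff_shadowing
    {𝕂 : Type*} [RCLike 𝕂] {X : Type*} [NormedAddCommGroup X] [NormedSpace 𝕂 X]
    [CompleteSpace X] {d : ℕ}
    (S : ℤ → X ≃L[𝕂] X) (hS : UnifBounded S)
    (b : Fin d → X) (hbli : LinearIndependent 𝕂 b)
    (hbsp : Submodule.span 𝕂 (Set.range b) = ⊤)
    (hEli : ∀ n : ℤ, LinearIndependent 𝕂 (fun i => eVec S (b i) n))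
    (hEsp : ∀ n : ℤ, Submodule.span 𝕂 (Set.range fun i => eVec S (b i) n) = ⊤)
    (hproj : ∃ C : ℝ, ∀ (n : ℤ) (α : Fin d → 𝕂) (i : Fin d),
      ‖α i • eVec S (b i) n‖ ≤ C * ‖∑ j, α j • eVec S (b j) n‖)
    (p : ℝ≥0∞) [Fact (1 ≤ p)] (hp : p ≠ ∞)
    (σ : lp (fun _ : ℤ => X) p ≃L[𝕂] lp (fun _ : ℤ => X) p)
    (hσ : ∀ (u : lp (fun _ : ℤ => X) p) (n : ℤ), σ u n = S (n + 1) (u (n + 1))) :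
    GeneralizedHyperbolic σ ↔ Shadowing ⇑σ := by
  have hp1 : (1 : ℝ≥0∞) ≤ p := Fact.out
  have hp0 : 0 < p := zero_lt_one.trans_le hp1
  have hpr : 0 < p.toReal := ENNReal.toReal_pos hp0.ne' hp
  obtain ⟨C, hC⟩ := hproj
  have horb : ∀ n i, orb S (b i) n ≠ 0 := fun n i h => (hEli n).ne_zero i (by simp [eVec_eq, h])
  have hunit : ∀ n i, IsUnit ((‖orb S (b i) n‖ : ℝ) : 𝕂) := fun n i =>
    isUnit_iff_ne_zero.2 (by simpa using horb n i)
  -- The bases of unnormalized vectors, obtained by rescaling the bases `𝓔_n`.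
  let F : ℤ → Module.Basis (Fin d) 𝕂 X := fun n =>
    (Module.Basis.mk (hEli n) (hEsp n).ge).isUnitSMul (hunit n)
  have hFo : ∀ n i, F n i = orb S (b i) n := fun n i => by
    simp only [F, Module.Basis.isUnitSMul_apply, Module.Basis.mk_apply, eVec_eq]
    rw [smul_inv_smul₀ (hunit n i).ne_zero]
  have hF : ∀ n i, S n (F n i) = F (n - 1) i := fun n i => by rw [hFo, hFo, map_orb]
  have hFC : ∀ n v i, ‖(F n).repr v i‖ * ‖F n i‖ ≤ max 1 C * ‖v‖ := by
    intro n v i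
    have he : ∀ j, F n j = ((‖orb S (b j) n‖ : ℝ) : 𝕂) • eVec S (b j) n := fun j => by
      simp only [F, Module.Basis.isUnitSMul_apply, Module.Basis.mk_apply]
    have h := hC n (fun j => (F n).repr v j * ((‖orb S (b j) n‖ : ℝ) : 𝕂)) i
    simp only [mul_smul, ← he, Module.Basis.sum_repr, norm_smul] at h
    exact h.trans (by gcongr; exact le_max_right _ _)
  refine ⟨GeneralizedHyperbolic.shadowing, fun h => ?_⟩
  obtain ⟨D, hD, lam, hl0, hl1, G, hG, hGM, hGN⟩ :=
    exists_splitting_of_shadowing hS hF (le_max_left 1 C) hFC hp0 hσ h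
  exact generalizedHyperbolic_of_splitting hF (le_max_left 1 C) hFC hpr hσ hD hl0 hl1 hG hGM hGN
end
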